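/- arXiv:1909.13757 — 2 statements merged into one kernel-verified Lean document; each statement's English description precedes it below -/
import Mathlib

section
/- Let g : ℝ → ℝ and g' : ℝ → ℝ be functions such that g has derivative g'(t) at every t ≥ 0, and suppose that both g and g' are Lebesgue integrable on (0,∞). Then g(t) → 0 as t → ∞, and g(0) = −∫₀^∞ g'(t) dt. -/
open MeasureTheory Filter

/-- If `g` is differentiable with derivative `g'` on `[0,∞)`, and both
`g` and `g'` are Lebesgue integrable on `(0,∞)`, then `g(t) → 0` as `t → ∞` and
`g(0) = -∫₀^∞ g'(t) dt`. -/
theorem stmt_3 (g g' : ℝ → ℝ)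
    (hderiv : ∀ t : ℝ, 0 ≤ t → HasDerivAt g (g' t) t)
    (hg : IntegrableOn g (Set.Ioi (0 : ℝ)))
    (hg' : IntegrableOn g' (Set.Ioi (0 : ℝ))) :
    Tendsto g atTop (nhds 0) ∧ g 0 = -∫ t in Set.Ioi (0 : ℝ), g' t := by
  -- `g` has a limit because `g'` is integrable, and integrability of `g` forces that limit to be `0`.
  have hlim : Tendsto g atTop (nhds 0) :=
    tendsto_zero_of_hasDerivAt_of_integrableOn_Ioi
      (fun t ht => hderiv t (le_of_lt ht)) hg' hg
  refine ⟨hlim, ?_⟩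
  rw [integral_Ioi_of_hasDerivAt_of_tendsto' (fun t ht => hderiv t ht) hg' hlim]
  ring
end

section
/- Let V be a real normed vector space, let d ≥ 0 be a natural number, and for each k ∈ {0,…,d} let T_k : V^k → ℝ be a symmetric continuous k-multilinear form (T_0 being a constant). If the function y ↦ Σ_{k=0}^{d} T_k(y,…,y) is o(‖y‖_V^d) as y → 0 in V, then T_k = 0 for every k ∈ {0,…,d}. -/
/-!
Fix `y`. Along the line `t ↦ t • y` the sum becomes the polynomial `Σ T_k(y,…,y) t^k`, of degree at
most `d` and `o(t^d)` at `0`, so all its coefficients vanish (`coeff_eq_zero_of_isLittleO`): let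
`t → 0` to kill the constant coefficient, divide by `t`, and induct on `d`. Thus each `T_k` vanishes
on the diagonal. A symmetric form vanishing on the diagonal is zero by polarization
(`eq_zero_of_symm_of_diag_eq_zero`): the `k`-th derivative of `y ↦ T_k(y,…,y)` in the directions
`v_1,…,v_k` is `k! T_k(v_1,…,v_k)`.
-/

open Asymptotics

/-- A polynomial of degree at most `d` that is `o(t^d)` at `0` has zero coefficients. -/
lemma coeff_eq_zero_of_isLittleO (d : ℕ) (c : ℕ → ℝ)
    (h : (fun t : ℝ => ∑ k ∈ Finset.range (d + 1), c k * t ^ k)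
      =o[nhdsWithin 0 {0}ᶜ] fun t : ℝ => t ^ d) :
    ∀ k ≤ d, c k = 0 := by
  induction d generalizing c with
  | zero =>
    intro k hk
    obtain rfl : k = 0 := by omega
    simpa [isLittleO_const_const_iff] using h
  | succ d ih =>
    have h0 : c 0 = 0 := by
      have hlim : Filter.Tendsto (fun t : ℝ => ∑ k ∈ Finset.range (d + 1 + 1), c k * t ^ k)
          (nhdsWithin 0 {0}ᶜ) (nhds (c 0)) := by
        have hc : Continuous (fun t : ℝ => ∑ k ∈ Finset.range (d + 1 + 1), c k * t ^ k) := by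
          fun_prop
        have := (hc.tendsto 0).mono_left (nhdsWithin_le_nhds (s := {0}ᶜ))
        simpa [Finset.sum_range_succ'] using this
      have hpow : Filter.Tendsto (fun t : ℝ => t ^ (d + 1)) (nhdsWithin 0 {0}ᶜ) (nhds 0) := by
        have hc : Continuous (fun t : ℝ => t ^ (d + 1)) := by fun_prop
        simpa using (hc.tendsto 0).mono_left (nhdsWithin_le_nhds (s := {0}ᶜ))
      exact tendsto_nhds_unique hlim (h.isBigO.trans_tendsto hpow)
    have hs : ∀ k ≤ d, c (k + 1) = 0 := by
      apply ih (fun k => c (k + 1))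
      refine ((isBigO_refl (fun t : ℝ => t⁻¹) _).mul_isLittleO h).congr' ?_ ?_
      · filter_upwards [self_mem_nhdsWithin] with t ht
        have ht : t ≠ 0 := ht
        rw [Finset.sum_range_succ', h0, zero_mul, add_zero, Finset.mul_sum]
        refine Finset.sum_congr rfl fun k _ => ?_
        field_simp
        ring
      · filter_upwards [self_mem_nhdsWithin] with t ht
        have ht : t ≠ 0 := ht
        field_simp
        ring
    intro k hk
    cases k with
    | zero => exact h0
    | succ k => exact hs k (by omega)

/-- Polarization: a symmetric multilinear form is determined by its diagonal. -/
lemma eq_zero_of_symm_of_diag_eq_zero {V : Type*} [NormedAddCommGroup V] [NormedSpace ℝ V] {n : ℕ}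
    (f : ContinuousMultilinearMap ℝ (fun _ : Fin n => V) ℝ)
    (hsym : ∀ (σ : Equiv.Perm (Fin n)) (v : Fin n → V), f (fun i => v (σ i)) = f v)
    (hdiag : ∀ y : V, f (fun _ => y) = 0) : f = 0 := by
  ext v
  have h := f.iteratedFDeriv_comp_diagonal 0 v
  have hz : (fun y : V => f (fun _ => y)) = fun _ => 0 := funext hdiag
  rw [hz] at h
  simp only [hsym] at h
  simpa [Nat.factorial_ne_zero, Fintype.card_perm] using h

/-- If a finite sum `Σ_{k=0}^d T_k(y,…,y)` of diagonal evaluations of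
symmetric continuous multilinear forms is `o(‖y‖^d)` as `y → 0`, then every `T_k`
vanishes. -/
theorem stmt_6 (V : Type*) [NormedAddCommGroup V] [NormedSpace ℝ V] (d : ℕ)
    (T : ∀ k : Fin (d + 1), ContinuousMultilinearMap ℝ (fun _ : Fin (k : ℕ) => V) ℝ)
    (hsym : ∀ (k : Fin (d + 1)) (σ : Equiv.Perm (Fin (k : ℕ))) (v : Fin (k : ℕ) → V),
      T k (fun i => v (σ i)) = T k v)
    (ho : (fun y : V => ∑ k : Fin (d + 1), T k (fun _ => y))
        =o[nhds 0] fun y : V => ‖y‖ ^ d) :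
    ∀ k, T k = 0 := by
  intro k
  refine eq_zero_of_symm_of_diag_eq_zero (T k) (hsym k) fun y => ?_
  let c : ℕ → ℝ := fun j => if hj : j < d + 1 then T ⟨j, hj⟩ (fun _ => y) else 0
  have hcT : ∀ j : Fin (d + 1), c j = T j (fun _ => y) := fun j => dif_pos j.2
  have hline : Filter.Tendsto (fun t : ℝ => t • y) (nhdsWithin 0 {0}ᶜ) (nhds 0) := by
    have hc : Continuous (fun t : ℝ => t • y) := by fun_prop
    simpa using (hc.tendsto 0).mono_left (nhdsWithin_le_nhds (s := {0}ᶜ))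
  have hO : (fun t : ℝ => ‖t • y‖ ^ d) =O[nhdsWithin 0 {0}ᶜ] fun t : ℝ => t ^ d := by
    refine IsBigO.of_bound (‖y‖ ^ d) (Filter.Eventually.of_forall fun t => ?_)
    simp [norm_smul, mul_pow, mul_comm]
  have hc : c k = 0 := by
    refine coeff_eq_zero_of_isLittleO d c ?_ k (by omega)
    refine ((ho.comp_tendsto hline).trans_isBigO hO).congr_left fun t => ?_
    rw [Finset.sum_range]
    refine Finset.sum_congr rfl fun j _ => ?_
    have := (T j).map_smul_univ (fun _ => t) (fun _ => y)
    simp only [Finset.prod_const, Finset.card_univ, Fintype.card_fin, smul_eq_mul] at this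
    rw [hcT, mul_comm]
    exact this
  exact (hcT k).symm.trans hc
end
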